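/- arXiv:2303.11452 — 2 statements merged into one kernel-verified Lean document; each statement's English description precedes it below -/
import Mathlib

section
/- Let 0 < μ ≤ 1/2 and assume there exists a set S ⊆ V with μ·Vol(G) ≤ Vol(S) ≤ (1−μ)·Vol(G). Then λ_μ(G) ≥ (1/2)·max{ min{ ((μ/(1−μ))·φ_μ(G))², ((μ²·φ_μ(G) + (1−2μ)·φ_0(G))/(1−μ−μ²))² }, φ_0(G)² }. -/
open Finset

/-- Indicator of `s < t`. -/
noncomputable def stepJ (t s : ℝ) : ℝ := if s < t then 1 else 0

theorem stepJ_anti (t : ℝ) : Antitone (stepJ t) := by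
  intro a b hab
  unfold stepJ
  split_ifs <;> first | linarith | norm_num

theorem stepJ_ii (t a b : ℝ) : IntervalIntegrable (stepJ t) MeasureTheory.volume a b :=
  (stepJ_anti t).intervalIntegrable

theorem stepJ_integral (t B : ℝ) (h0 : 0 ≤ t) (hB : t ≤ B) :
    ∫ s in (0:ℝ)..B, stepJ t s = t := by
  rw [← intervalIntegral.integral_add_adjacent_intervals (stepJ_ii t 0 t) (stepJ_ii t t B)]
  have h1 : ∫ s in (0:ℝ)..t, stepJ t s = ∫ s in (0:ℝ)..t, (1:ℝ) := by
    rw [intervalIntegral.integral_of_le h0, intervalIntegral.integral_of_le h0,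
      MeasureTheory.integral_Ioc_eq_integral_Ioo, MeasureTheory.integral_Ioc_eq_integral_Ioo]
    apply MeasureTheory.setIntegral_congr_fun measurableSet_Ioo
    intro s hs
    simp [stepJ, hs.2]
  have h2 : ∫ s in t..B, stepJ t s = ∫ s in t..B, (0:ℝ) := by
    apply intervalIntegral.integral_congr
    intro s hs
    rw [Set.uIcc_of_le hB] at hs
    simp [stepJ, hs.1]
  rw [h1, h2]
  simp

theorem coarea_ineq {V : Type*} [Fintype V] (w : V → V → ℝ) (d f : V → ℝ)
    (hf : ∀ v, 0 ≤ f v) (c e a : ℝ) (ha : 0 ≤ a)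
    (H : ∀ s, 0 ≤ s → ∑ v, d v * (c * stepJ (f v) s + e * stepJ (min (f v) a) s) ≤
      ∑ u, ∑ v, w u v * (stepJ (f u) s - stepJ (min (f u) (f v)) s)) :
    ∑ v, d v * (c * f v + e * min (f v) a) ≤ ∑ u, ∑ v, w u v * (f u - min (f u) (f v)) := by
  set B := ∑ v, f v with hB
  have hfB : ∀ v, f v ≤ B := fun v => Finset.single_le_sum (fun i _ => hf i) (Finset.mem_univ v)
  have hB0 : 0 ≤ B := Finset.sum_nonneg (fun i _ => hf i)
  have iL : ∀ v, IntervalIntegrable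
      (fun s => d v * (c * stepJ (f v) s + e * stepJ (min (f v) a) s)) MeasureTheory.volume 0 B :=
    fun v => (((stepJ_ii _ _ _).const_mul c).add ((stepJ_ii _ _ _).const_mul e)).const_mul _
  have iR : ∀ u v, IntervalIntegrable
      (fun s => w u v * (stepJ (f u) s - stepJ (min (f u) (f v)) s)) MeasureTheory.volume 0 B :=
    fun u v => ((stepJ_ii _ _ _).sub (stepJ_ii _ _ _)).const_mul _
  have iR2 : ∀ u, IntervalIntegrable
      (fun s => ∑ v, w u v * (stepJ (f u) s - stepJ (min (f u) (f v)) s))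
      MeasureTheory.volume 0 B := fun u => by
    have := IntervalIntegrable.sum (Finset.univ) (fun v _ => iR u v)
    simpa [Finset.sum_fn] using this
  have iL3 : IntervalIntegrable
      (fun s => ∑ v, d v * (c * stepJ (f v) s + e * stepJ (min (f v) a) s))
      MeasureTheory.volume 0 B := by
    have := IntervalIntegrable.sum (Finset.univ) (fun v _ => iL v)
    simpa [Finset.sum_fn] using this
  have iR3 : IntervalIntegrable
      (fun s => ∑ u, ∑ v, w u v * (stepJ (f u) s - stepJ (min (f u) (f v)) s))
      MeasureTheory.volume 0 B := by
    have := IntervalIntegrable.sum (Finset.univ) (fun u _ => iR2 u)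
    simpa [Finset.sum_fn] using this
  have key := intervalIntegral.integral_mono_on hB0 iL3 iR3 (fun s hs => H s hs.1)
  rw [intervalIntegral.integral_finset_sum (fun v _ => iL v),
    intervalIntegral.integral_finset_sum (fun u _ => iR2 u)] at key
  convert key using 2 with v _ u _
  · rw [intervalIntegral.integral_const_mul, intervalIntegral.integral_add
      ((stepJ_ii _ _ _).const_mul c) ((stepJ_ii _ _ _).const_mul e),
      intervalIntegral.integral_const_mul, intervalIntegral.integral_const_mul,
      stepJ_integral _ _ (hf v) (hfB v),
      stepJ_integral _ _ (le_min (hf v) ha) ((min_le_left _ _).trans (hfB v))]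
  · rw [intervalIntegral.integral_finset_sum (fun v _ => iR u v)]
    refine Finset.sum_congr rfl fun v _ => ?_
    rw [intervalIntegral.integral_const_mul, intervalIntegral.integral_sub
      (stepJ_ii _ _ _) (stepJ_ii _ _ _), stepJ_integral _ _ (hf u) (hfB u),
      stepJ_integral _ _ (le_min (hf u) (hf v)) ((min_le_left _ _).trans (hfB u))]

theorem coarea_cut {V : Type*} [Fintype V] [DecidableEq V] (w : V → V → ℝ) (d f : V → ℝ)
    (hf : ∀ v, 0 ≤ f v) (c e a : ℝ) (ha : 0 ≤ a)
    (H : ∀ s, 0 ≤ s → ∀ S : Finset V, S = Finset.univ.filter (fun v => s < f v) →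
      c * (∑ v ∈ S, d v) + (if s < a then e * (∑ v ∈ S, d v) else 0) ≤
        ∑ u ∈ S, ∑ v ∈ Sᶜ, w u v) :
    ∑ v, d v * (c * f v + e * min (f v) a) ≤ ∑ u, ∑ v, w u v * (f u - min (f u) (f v)) := by
  apply coarea_ineq w d f hf c e a ha
  intro s hs
  have h := H s hs _ rfl
  have e1 : ∑ v, d v * (c * stepJ (f v) s + e * stepJ (min (f v) a) s) =
      c * (∑ v ∈ Finset.univ.filter (fun v => s < f v), d v) +
      (if s < a then e * (∑ v ∈ Finset.univ.filter (fun v => s < f v), d v) else 0) := by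
    rw [Finset.sum_filter]
    by_cases hsa : s < a
    · simp only [hsa, if_true, Finset.mul_sum, ← Finset.sum_add_distrib]
      refine Finset.sum_congr rfl fun v _ => ?_
      by_cases h1 : s < f v <;> simp [stepJ, h1, hsa] <;> ring
    · simp only [hsa, if_false, Finset.mul_sum, add_zero]
      refine Finset.sum_congr rfl fun v _ => ?_
      by_cases h1 : s < f v <;> simp [stepJ, h1, hsa] <;> ring
  have e2 : ∑ u, ∑ v, w u v * (stepJ (f u) s - stepJ (min (f u) (f v)) s) =
      ∑ u ∈ Finset.univ.filter (fun v => s < f v),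
        ∑ v ∈ (Finset.univ.filter (fun v => s < f v))ᶜ, w u v := by
    rw [Finset.sum_filter]
    refine Finset.sum_congr rfl fun u _ => ?_
    by_cases h1 : s < f u
    · rw [if_pos h1, Finset.compl_filter, Finset.sum_filter]
      refine Finset.sum_congr rfl fun v _ => ?_
      by_cases h2 : s < f v <;> simp [stepJ, h1, h2]
    · rw [if_neg h1]
      refine Finset.sum_eq_zero fun v _ => ?_
      simp [stepJ, h1]
  rw [e1, e2]
  exact h

theorem edge_ineq (x y : ℝ) :
    |max x 0 ^ 2 - max y 0 ^ 2| + |max (-x) 0 ^ 2 - max (-y) 0 ^ 2| ≤ |x - y| * (|x| + |y|) := by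
  rcases le_total 0 x with hx | hx <;> rcases le_total 0 y with hy | hy
  · rw [max_eq_left hx, max_eq_left hy, max_eq_right (by linarith : -x ≤ 0),
      max_eq_right (by linarith : -y ≤ 0), abs_of_nonneg hx, abs_of_nonneg hy,
      show x^2-y^2 = (x-y)*(x+y) by ring, abs_mul, abs_of_nonneg (by linarith : 0 ≤ x + y)]
    simp
  · rw [max_eq_left hx, max_eq_right hy, max_eq_right (by linarith : -x ≤ 0),
      max_eq_left (by linarith : 0 ≤ -y), abs_of_nonneg hx, abs_of_nonpos hy,
      abs_of_nonneg (by linarith : 0 ≤ x - y), abs_of_nonneg (by nlinarith),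
      abs_of_nonpos (by nlinarith)]
    nlinarith [mul_nonneg hx (neg_nonneg.2 hy)]
  · rw [max_eq_right hx, max_eq_left hy, max_eq_left (by linarith : 0 ≤ -x),
      max_eq_right (by linarith : -y ≤ 0), abs_of_nonpos hx, abs_of_nonneg hy,
      abs_of_nonpos (by linarith : x - y ≤ 0), abs_of_nonpos (by nlinarith),
      abs_of_nonneg (by nlinarith)]
    nlinarith [mul_nonneg hy (neg_nonneg.2 hx)]
  · rw [max_eq_right hx, max_eq_right hy, max_eq_left (by linarith : 0 ≤ -x),
      max_eq_left (by linarith : 0 ≤ -y), abs_of_nonpos hx, abs_of_nonpos hy,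
      show (-x)^2-(-y)^2 = (x-y)*(x+y) by ring, abs_mul, abs_of_nonpos (by linarith : x + y ≤ 0)]
    simp
    linarith

theorem sum_min_abs {V : Type*} [Fintype V] (w : V → V → ℝ)
    (hs : ∀ u v, w u v = w v u) (f : V → ℝ) :
    ∑ u, ∑ v, w u v * (f u - min (f u) (f v)) = (1/2) * ∑ u, ∑ v, w u v * |f u - f v| := by
  have h1 : ∑ u, ∑ v, w u v * (f u - min (f u) (f v)) =
      ∑ u, ∑ v, w u v * (f v - min (f u) (f v)) := by
    rw [Finset.sum_comm]
    refine Finset.sum_congr rfl fun u _ => Finset.sum_congr rfl fun v _ => ?_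
    rw [hs v u, min_comm]
  have h2 : ∑ u, ∑ v, w u v * (f u - min (f u) (f v)) +
      ∑ u, ∑ v, w u v * (f v - min (f u) (f v)) = ∑ u, ∑ v, w u v * |f u - f v| := by
    simp only [← Finset.sum_add_distrib]
    refine Finset.sum_congr rfl fun u _ => Finset.sum_congr rfl fun v _ => ?_
    rw [← mul_add]
    congr 1
    rcases le_total (f u) (f v) with h | h
    · rw [min_eq_left h, abs_of_nonpos (by linarith)]; ring
    · rw [min_eq_right h, abs_of_nonneg (by linarith)]; ring
  linarith

theorem cheeger_core {V : Type*} [Fintype V] (w : V → V → ℝ)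
    (hs : ∀ u v, w u v = w v u) (hw : ∀ u v, 0 ≤ w u v) (d : V → ℝ) (hd : ∀ v, d v = ∑ u, w v u)
    (y : V → ℝ) (K : ℝ) (hK : 0 ≤ K) (hQ : 0 < ∑ v, d v * y v ^ 2)
    (H : K * ∑ v, d v * y v ^ 2 ≤
      ∑ u, ∑ v, w u v * ((max (y u) 0)^2 - min ((max (y u) 0)^2) ((max (y v) 0)^2)) +
      ∑ u, ∑ v, w u v * ((max (-y u) 0)^2 - min ((max (-y u) 0)^2) ((max (-y v) 0)^2))) :
    (1/2) * K^2 * ∑ v, d v * y v ^ 2 ≤ (1/2) * ∑ u, ∑ v, w u v * (y u - y v)^2 := by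
  rw [sum_min_abs w hs (fun v => (max (y v) 0)^2), sum_min_abs w hs (fun v => (max (-y v) 0)^2),
    ← mul_add] at H
  simp only [← Finset.sum_add_distrib, ← mul_add] at H
  set Q := ∑ v, d v * y v ^ 2 with hQdef
  set A := ∑ u, ∑ v, w u v * (|y u - y v| * (|y u| + |y v|)) with hA
  have h1 : K * Q ≤ (1/2) * A := by
    refine H.trans (mul_le_mul_of_nonneg_left ?_ (by norm_num))
    refine Finset.sum_le_sum fun u _ => Finset.sum_le_sum fun v _ => ?_
    exact mul_le_mul_of_nonneg_left (edge_ineq _ _) (hw u v)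
  have h2 : A^2 ≤ (∑ u, ∑ v, w u v * (y u - y v)^2) * (∑ u, ∑ v, w u v * (|y u| + |y v|)^2) := by
    have := Finset.sum_mul_sq_le_sq_mul_sq (Finset.univ : Finset (V × V))
      (fun p => Real.sqrt (w p.1 p.2) * |y p.1 - y p.2|)
      (fun p => Real.sqrt (w p.1 p.2) * (|y p.1| + |y p.2|))
    simp only [Fintype.sum_prod_type, mul_pow, Real.sq_sqrt (hw _ _), sq_abs] at this
    refine le_trans (le_of_eq ?_) this
    rw [hA]
    congr 1
    refine Finset.sum_congr rfl fun u _ => Finset.sum_congr rfl fun v _ => ?_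
    have := Real.mul_self_sqrt (hw u v)
    linear_combination (-(|y u - y v| * (|y u| + |y v|))) * this
  have h3 : ∑ u, ∑ v, w u v * (|y u| + |y v|)^2 ≤ 4 * Q := by
    have a1 : ∑ u, ∑ v, w u v * y u ^ 2 = Q := by
      rw [hQdef]
      refine Finset.sum_congr rfl fun u _ => ?_
      rw [hd, Finset.sum_mul]
    have a2 : ∑ u, ∑ v, w u v * y v ^ 2 = Q := by
      rw [← a1, Finset.sum_comm]
      refine Finset.sum_congr rfl fun u _ => Finset.sum_congr rfl fun v _ => ?_
      rw [hs]
    calc ∑ u, ∑ v, w u v * (|y u| + |y v|)^2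
        ≤ ∑ u, ∑ v, (2 * (w u v * y u ^ 2) + 2 * (w u v * y v ^ 2)) := by
          refine Finset.sum_le_sum fun u _ => Finset.sum_le_sum fun v _ => ?_
          have : (|y u| + |y v|)^2 ≤ 2 * y u ^2 + 2 * y v ^ 2 := by
            rw [← sq_abs (y u), ← sq_abs (y v)]
            nlinarith [sq_nonneg (|y u| - |y v|)]
          nlinarith [mul_le_mul_of_nonneg_left this (hw u v)]
      _ = 4 * Q := by
          simp only [Finset.sum_add_distrib, ← Finset.mul_sum, a1, a2]; ring
  set L := ∑ u, ∑ v, w u v * (y u - y v)^2 with hL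
  have hL0 : 0 ≤ L := Finset.sum_nonneg fun u _ => Finset.sum_nonneg fun v _ =>
    mul_nonneg (hw u v) (sq_nonneg _)
  have h4 : (2 * (K * Q))^2 ≤ L * (4 * Q) := by
    have : (2 * (K * Q))^2 ≤ A^2 := pow_le_pow_left₀ (by positivity) (by linarith) 2
    exact this.trans (h2.trans (mul_le_mul_of_nonneg_left h3 hL0))
  have h5 : (K^2 * Q) * Q ≤ L * Q := by nlinarith
  have h6 := le_of_mul_le_mul_right h5 hQ
  linarith

theorem exists_median {V : Type*} [Fintype V] [Nonempty V] (d x : V → ℝ)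
    (hd : ∀ v, 0 < d v) : ∃ c : ℝ,
    2 * (∑ v ∈ Finset.univ.filter (fun v => c < x v), d v) ≤ ∑ v, d v ∧
    2 * (∑ v ∈ Finset.univ.filter (fun v => x v < c), d v) ≤ ∑ v, d v := by
  classical
  set T := Finset.univ.filter
    (fun u => 2 * (∑ v ∈ Finset.univ.filter (fun v => x u < x v), d v) ≤ ∑ v, d v) with hT
  have hpos : 0 < ∑ v, d v := Finset.sum_pos (fun v _ => hd v) Finset.univ_nonempty
  have hTn : T.Nonempty := by
    obtain ⟨u, -, hu⟩ := Finset.exists_max_image (Finset.univ : Finset V) x Finset.univ_nonempty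
    refine ⟨u, ?_⟩
    rw [hT, Finset.mem_filter]
    refine ⟨Finset.mem_univ _, ?_⟩
    rw [Finset.filter_false_of_mem (fun v _ => not_lt.2 (hu v (Finset.mem_univ _)))]
    simpa using hpos.le
  obtain ⟨u, huT, hu⟩ := Finset.exists_min_image T x hTn
  refine ⟨x u, (Finset.mem_filter.1 huT).2, ?_⟩
  by_contra hcon
  push Not at hcon
  have hne : (Finset.univ.filter (fun v => x v < x u)).Nonempty := by
    by_contra h
    rw [Finset.not_nonempty_iff_eq_empty] at h
    rw [h] at hcon
    simp at hcon
    linarith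
  obtain ⟨z, hz, hzm⟩ := Finset.exists_max_image _ x hne
  have hzu : x z < x u := (Finset.mem_filter.1 hz).2
  have hzT : z ∈ T := by
    rw [hT, Finset.mem_filter]
    refine ⟨Finset.mem_univ _, ?_⟩
    have e := Finset.sum_filter_add_sum_filter_not (Finset.univ : Finset V)
      (fun v => x v < x u) d
    have : (Finset.univ.filter (fun v => x z < x v)) =
        Finset.univ.filter (fun v => ¬ x v < x u) := by
      ext v
      simp only [Finset.mem_filter, Finset.mem_univ, true_and]
      constructor
      · intro h h'
        exact absurd (hzm v (by simp [h'])) (not_le.2 h)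
      · intro h
        linarith [not_lt.1 h]
    rw [this]
    linarith
  linarith [hu z hzT]

theorem vol_pos_le {V : Type*} [Fintype V] (d x : V → ℝ) (hd : ∀ v, 0 < d v)
    (μ α β : ℝ) (hμ0 : 0 < μ) (hα : 0 < α) (hαβ : μ * β = (1 - μ) * α)
    (h0 : ∑ v, d v * x v = 0) (hx : ∀ v, α ≤ |x v| ∧ |x v| ≤ β) :
    ∑ v ∈ Finset.univ.filter (fun v => 0 < x v), d v ≤ (1 - μ) * ∑ v, d v := by
  have h : ∑ v, d v * ((α + β) * (if 0 < x v then 1 else 0) - β) ≤ ∑ v, d v * x v := by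
    refine Finset.sum_le_sum fun v _ => mul_le_mul_of_nonneg_left ?_ (hd v).le
    have := hx v
    split_ifs with hv
    · rw [abs_of_pos hv] at this; linarith
    · rw [abs_of_nonpos (not_lt.1 hv)] at this; linarith
  rw [h0] at h
  have e : ∑ v, d v * ((α + β) * (if 0 < x v then 1 else 0) - β) =
      (α + β) * ∑ v ∈ Finset.univ.filter (fun v => 0 < x v), d v - β * ∑ v, d v := by
    rw [Finset.sum_filter, Finset.mul_sum, Finset.mul_sum, ← Finset.sum_sub_distrib]
    refine Finset.sum_congr rfl fun v _ => ?_
    split_ifs <;> ring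
  rw [e] at h
  set p := ∑ v ∈ Finset.univ.filter (fun v => 0 < x v), d v
  set m := ∑ v, d v
  have h1 : μ * ((α + β) * p - β * m) ≤ 0 := mul_nonpos_of_nonneg_of_nonpos hμ0.le h
  have h2 : α * (p - (1 - μ) * m) ≤ 0 := by
    have : μ * ((α + β) * p - β * m) = α * (p - (1 - μ) * m) := by
      linear_combination (p - m) * hαβ
    linarith
  have := nonpos_of_mul_nonpos_right h2 hα
  linarith

open Finset

theorem mu_conductance_cheeger_lower {V : Type*} [Fintype V] [DecidableEq V] [Nonempty V]
    (w : V → V → ℝ)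
    (hw_symm : ∀ u v, w u v = w v u)
    (hw_nonneg : ∀ u v, 0 ≤ w u v)
    (hw_loop : ∀ v, w v v = 0)
    (d : V → ℝ) (hd : ∀ v, d v = ∑ u, w v u)
    (hd_pos : ∀ v, 0 < d v)
    (vol : Finset V → ℝ) (hvol : ∀ S : Finset V, vol S = ∑ v ∈ S, d v)
    (cut : Finset V → ℝ) (hcut : ∀ S : Finset V, cut S = ∑ u ∈ S, ∑ v ∈ Sᶜ, w u v)
    (phi : Finset V → ℝ) (hphi : ∀ S : Finset V, phi S = cut S / min (vol S) (vol Sᶜ))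
    (QL QD : (V → ℝ) → ℝ)
    (hQL : ∀ x : V → ℝ, QL x = (1/2) * ∑ u, ∑ v, w u v * (x u - x v)^2)
    (hQD : ∀ x : V → ℝ, QD x = ∑ v, d v * x v ^ 2)
    (μ : ℝ) (hμ0 : 0 < μ) (hμhalf : μ ≤ 1/2)
    (phi0 : ℝ)
    (hphi0 : IsLeast {y : ℝ | ∃ S : Finset V, S.Nonempty ∧ S ≠ Finset.univ ∧ y = phi S} phi0)
    (phimu : ℝ)
    (hphimu : IsLeast {y : ℝ | ∃ S : Finset V,
        μ * vol Finset.univ ≤ vol S ∧ vol S ≤ (1 - μ) * vol Finset.univ ∧ y = phi S} phimu)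
    (lam : ℝ)
    (hlam : IsGLB {y : ℝ | ∃ x : V → ℝ,
        (∑ v, d v * x v) = 0 ∧ QD x = 1 ∧
        (∀ v, Real.sqrt (μ / ((1 - μ) * vol Finset.univ)) ≤ |x v| ∧
              |x v| ≤ Real.sqrt ((1 - μ) / (μ * vol Finset.univ))) ∧ y = QL x} lam)
    :
    lam ≥ (1/2) * max
      (min ((μ / (1 - μ) * phimu)^2)
           (((μ^2 * phimu + (1 - 2*μ) * phi0) / (1 - μ - μ^2))^2))
      (phi0^2) := by
  have hvc : ∀ S : Finset V, vol S + vol Sᶜ = vol Finset.univ := by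
    intro S
    rw [hvol, hvol, hvol]
    exact Finset.sum_add_sum_compl S d
  have hm : 0 < vol Finset.univ := by
    rw [hvol]; exact Finset.sum_pos (fun v _ => hd_pos v) Finset.univ_nonempty
  have hmd : vol Finset.univ = ∑ v, d v := hvol _
  set m := vol Finset.univ with hmdef
  have hvn : ∀ S : Finset V, 0 ≤ vol S := fun S => by
    rw [hvol]; exact Finset.sum_nonneg fun v _ => (hd_pos v).le
  have hcn : ∀ S : Finset V, 0 ≤ cut S := fun S => by
    rw [hcut]; exact Finset.sum_nonneg fun u _ => Finset.sum_nonneg fun v _ => hw_nonneg u v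
  have hphin : ∀ S : Finset V, 0 ≤ phi S := fun S => by
    rw [hphi]; exact div_nonneg (hcn S) (le_min (hvn _) (hvn _))
  have hp0 : 0 ≤ phi0 := by
    obtain ⟨S, -, -, h⟩ := hphi0.1
    rw [h]; exact hphin S
  have hpm : 0 ≤ phimu := by
    obtain ⟨S, -, -, h⟩ := hphimu.1
    rw [h]; exact hphin S
  have h1μ : 0 < 1 - μ := by linarith
  have hκ0 : 0 < μ / (1 - μ) := div_pos hμ0 h1μ
  have hκ1 : μ / (1 - μ) ≤ 1 := by rw [div_le_one h1μ]; linarith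
  set κ := μ / (1 - μ) with hκ
  have hκe : κ * (1 - μ) = μ := by rw [hκ]; field_simp
  have cut0 : ∀ S : Finset V, 2 * vol S ≤ m → phi0 * vol S ≤ cut S := by
    intro S hS
    rcases S.eq_empty_or_nonempty with rfl | hne
    · rw [hvol]; simpa using hcn ∅
    · have hSu : S ≠ Finset.univ := by
        rintro rfl
        linarith
      have hSp : 0 < vol S := by
        rw [hvol]; exact Finset.sum_pos (fun v _ => hd_pos v) hne
      have h := hphi0.2 ⟨S, hne, hSu, rfl⟩
      rw [hphi, min_eq_left (by linarith [hvc S])] at h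
      exact (le_div_iff₀ hSp).1 h
  have cutm : ∀ S : Finset V, μ * m ≤ vol S → vol S ≤ (1 - μ) * m →
      κ * phimu * vol S ≤ cut S := by
    intro S h1 h2
    have h := hphimu.2 ⟨S, h1, h2, rfl⟩
    have hμm : 0 < μ * m := mul_pos hμ0 hm
    have hmin : 0 < min (vol S) (vol Sᶜ) := lt_min (by linarith) (by linarith [hvc S])
    rw [hphi, le_div_iff₀ hmin] at h
    have hk : κ * vol S ≤ min (vol S) (vol Sᶜ) := by
      refine le_min (by nlinarith [hvn S]) ?_
      have : κ * vol S ≤ κ * ((1 - μ) * m) := mul_le_mul_of_nonneg_left h2 hκ0.le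
      have e : κ * ((1 - μ) * m) = μ * m := by rw [← mul_assoc, hκe]
      linarith [hvc S]
    nlinarith [mul_le_mul_of_nonneg_left hk hpm]
  refine hlam.2 ?_
  rintro _ ⟨x, hx0, hx1, hxb, rfl⟩
  rw [hQD] at hx1
  rw [mul_max_of_nonneg _ _ (by norm_num)]
  refine max_le ?_ ?_
  · -- the balanced part
    set a := μ / ((1 - μ) * m) with ha
    have ha0 : 0 < a := div_pos hμ0 (mul_pos h1μ hm)
    set α := Real.sqrt a with hα
    set β := Real.sqrt ((1 - μ) / (μ * m)) with hβ
    have hα0 : 0 < α := Real.sqrt_pos.2 ha0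
    have hα2 : α ^ 2 = a := Real.sq_sqrt ha0.le
    have ham : a * m = κ := by rw [ha, hκ]; field_simp
    have hαβ : μ * β = (1 - μ) * α := by
      have hβ2 : β ^ 2 = (1 - μ) / (μ * m) :=
        Real.sq_sqrt (div_pos h1μ (mul_pos hμ0 hm)).le
      have : (μ * β)^2 = ((1 - μ) * α)^2 := by
        rw [mul_pow, mul_pow, hβ2, hα2, ha]
        field_simp
      exact (pow_left_inj₀ (mul_nonneg hμ0.le (Real.sqrt_nonneg _))
        (mul_nonneg h1μ.le hα0.le) (by norm_num)).1 this
    have hP : vol (Finset.univ.filter (fun v => 0 < x v)) ≤ (1 - μ) * m := by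
      rw [hvol, hmd]; exact vol_pos_le d x hd_pos μ α β hμ0 hα0 hαβ hx0 hxb
    have hN : vol (Finset.univ.filter (fun v => 0 < -x v)) ≤ (1 - μ) * m := by
      rw [hvol, hmd]
      refine vol_pos_le d (fun v => -x v) hd_pos μ α β hμ0 hα0 hαβ ?_ ?_
      · simp [hx0]
      · intro v; simpa using hxb v
    have hxne : ∀ v, x v ≠ 0 := fun v h => by
      have := (hxb v).1
      rw [h, abs_zero] at this
      linarith
    have hPN : vol (Finset.univ.filter (fun v => 0 < x v)) +
        vol (Finset.univ.filter (fun v => 0 < -x v)) = m := by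
      rw [← hvc (Finset.univ.filter (fun v => 0 < x v)), Finset.compl_filter]
      congr 2
      ext v
      simp only [Finset.mem_filter, Finset.mem_univ, true_and, not_lt, Left.neg_pos_iff]
      exact ⟨fun h => h.le, fun h => lt_of_le_of_ne h (hxne v)⟩
    have oneSide : ∀ (z : V → ℝ), (∀ v, α ≤ |z v|) →
        μ * m ≤ vol (Finset.univ.filter (fun v => 0 < z v)) →
        vol (Finset.univ.filter (fun v => 0 < z v)) ≤ (1 - μ) * m →
        ∀ c e : ℝ, 0 ≤ c → c ≤ phi0 → c + e = κ * phimu → 0 ≤ e →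
        ∑ v, d v * (c * (max (z v) 0)^2 + e * min ((max (z v) 0)^2) a) ≤
        ∑ u, ∑ v, w u v * ((max (z u) 0)^2 - min ((max (z u) 0)^2) ((max (z v) 0)^2)) := by
      intro z hz hb1 hb2 c e hc hc0 hce he
      refine coarea_cut w d (fun v => (max (z v) 0)^2) (fun v => sq_nonneg _) c e a ha0.le ?_
      intro s hs S hS
      rw [← hvol, ← hcut]
      split_ifs with hsa
      · have : S = Finset.univ.filter (fun v => 0 < z v) := by
          rw [hS]
          ext v
          simp only [Finset.mem_filter, Finset.mem_univ, true_and]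
          constructor
          · intro h
            by_contra hzv
            rw [max_eq_right (not_lt.1 hzv)] at h
            norm_num at h
            linarith
          · intro h
            rw [max_eq_left h.le]
            have := hz v
            rw [abs_of_pos h] at this
            nlinarith
        rw [← this] at hb1 hb2
        have := cutm S hb1 hb2
        rw [← hce] at this
        linarith
      · have hsub : vol S ≤ vol (Finset.univ.filter (fun v => 0 < z v)) := by
          rw [hvol, hvol]
          refine Finset.sum_le_sum_of_subset_of_nonneg ?_ (fun v _ _ => (hd_pos v).le)
          rw [hS]
          intro v
          simp only [Finset.mem_filter, Finset.mem_univ, true_and]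
          intro h
          by_contra hzv
          rw [max_eq_right (not_lt.1 hzv)] at h
          norm_num at h
          linarith
        rw [add_zero]
        rcases le_total (μ * m) (vol S) with h | h
        · have h3 := cutm S h (by linarith)
          have := mul_le_mul_of_nonneg_right (by linarith : c ≤ κ * phimu) (hvn S)
          linarith
        · have h3 := cut0 S (by nlinarith)
          have := mul_le_mul_of_nonneg_right hc0 (hvn S)
          linarith
    have both : ∀ c e : ℝ, 0 ≤ c → c ≤ phi0 → c + e = κ * phimu → 0 ≤ e →
        (1/2) * (c + e * κ)^2 ≤ QL x := by
      intro c e hc hc0 hce he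
      have s1 := oneSide x (fun v => (hxb v).1) (by linarith) hP c e hc hc0 hce he
      have s2 := oneSide (fun v => -x v) (fun v => by simpa using (hxb v).1)
        (by linarith) hN c e hc hc0 hce he
      have hsum : ∑ v, d v * (c * (max (x v) 0)^2 + e * min ((max (x v) 0)^2) a) +
          ∑ v, d v * (c * (max (-x v) 0)^2 + e * min ((max (-x v) 0)^2) a) = c + e * κ := by
        have : c + e * κ = c * (∑ v, d v * x v ^ 2) + e * (a * ∑ v, d v) := by
          rw [hx1, ← hmd, ham]; ring
        rw [this, ← Finset.sum_add_distrib, Finset.mul_sum, Finset.mul_sum, Finset.mul_sum,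
          ← Finset.sum_add_distrib]
        refine Finset.sum_congr rfl fun v _ => ?_
        have hv := (hxb v).1
        have hva : a ≤ x v ^ 2 := by
          rw [← hα2, ← sq_abs (x v)]
          exact pow_le_pow_left₀ hα0.le hv 2
        rcases le_total 0 (x v) with h | h
        · rw [max_eq_left h, max_eq_right (by linarith : -x v ≤ 0), min_eq_right hva,
            zero_pow (by norm_num), min_eq_left ha0.le]
          ring
        · rw [max_eq_right h, max_eq_left (by linarith : 0 ≤ -x v), neg_sq, min_eq_right hva,
            zero_pow (by norm_num), min_eq_left ha0.le]
          ring
      have := cheeger_core w hw_symm hw_nonneg d hd x (c + e * κ) (by positivity)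
        (by rw [hx1]; norm_num) (by rw [hx1]; linarith)
      rw [hx1, mul_one] at this
      rw [hQL]
      exact this
    rcases le_total (κ * phimu) phi0 with hc | hc
    · have := both (κ * phimu) 0 (by positivity) hc (by ring) le_rfl
      rw [zero_mul, add_zero] at this
      exact (mul_le_mul_of_nonneg_left (min_le_left _ _) (by norm_num)).trans this
    · have := both phi0 (κ * phimu - phi0) hp0 le_rfl (by ring) (by linarith)
      refine (mul_le_mul_of_nonneg_left (min_le_right _ _) (by norm_num)).trans
        (le_trans ?_ this)
      have hden : 0 < 1 - μ - μ^2 := by nlinarith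
      refine mul_le_mul_of_nonneg_left (pow_le_pow_left₀ ?_ ?_ 2) (by norm_num)
      · refine div_nonneg ?_ hden.le
        have : 0 ≤ 1 - 2 * μ := by linarith
        positivity
      · rw [div_le_iff₀ hden]
        have hμe : μ = κ * (1 - μ) := hκe.symm
        have hdiff : (phi0 + (κ * phimu - phi0) * κ) * (1 - μ - μ^2) -
            (μ^2 * phimu + (1 - 2*μ) * phi0) =
            (κ * phimu - phi0) * (κ * μ * (1 - 2 * μ)) := by
          rw [hκ]
          field_simp
          ring
        have : 0 ≤ (κ * phimu - phi0) * (κ * μ * (1 - 2 * μ)) :=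
          mul_nonneg (by linarith) (mul_nonneg (mul_nonneg hκ0.le hμ0.le) (by linarith))
        linarith
  · -- the usual Cheeger inequality
    obtain ⟨c, hc1, hc2⟩ := exists_median d x hd_pos
    have oneSide : ∀ (z : V → ℝ),
        2 * vol (Finset.univ.filter (fun v => 0 < z v)) ≤ m →
        ∑ v, d v * (phi0 * (max (z v) 0)^2 + 0 * min ((max (z v) 0)^2) 0) ≤
        ∑ u, ∑ v, w u v * ((max (z u) 0)^2 - min ((max (z u) 0)^2) ((max (z v) 0)^2)) := by
      intro z hz
      refine coarea_cut w d (fun v => (max (z v) 0)^2) (fun v => sq_nonneg _) phi0 0 0 le_rfl ?_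
      intro s hs S hS
      rw [← hvol, ← hcut, if_neg (not_lt.2 hs), add_zero]
      have hsub : vol S ≤ vol (Finset.univ.filter (fun v => 0 < z v)) := by
        rw [hvol, hvol]
        refine Finset.sum_le_sum_of_subset_of_nonneg ?_ (fun v _ _ => (hd_pos v).le)
        rw [hS]
        intro v
        simp only [Finset.mem_filter, Finset.mem_univ, true_and]
        intro h
        by_contra hzv
        rw [max_eq_right (not_lt.1 hzv)] at h
        norm_num at h
        linarith
      exact cut0 S (by linarith)
    have s1 := oneSide (fun v => x v - c) (by simpa only [hvol, hmd, sub_pos] using hc1)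
    have s2 := oneSide (fun v => -(x v - c))
      (by simpa only [hvol, hmd, neg_sub, sub_pos] using hc2)
    have hsum : ∑ v, d v * (phi0 * (max (x v - c) 0)^2 + 0 * min ((max (x v - c) 0)^2) 0) +
        ∑ v, d v * (phi0 * (max (-(x v - c)) 0)^2 + 0 * min ((max (-(x v - c)) 0)^2) 0) =
        phi0 * ∑ v, d v * (x v - c)^2 := by
      rw [← Finset.sum_add_distrib, Finset.mul_sum]
      refine Finset.sum_congr rfl fun v _ => ?_
      rcases le_total 0 (x v - c) with h | h
      · rw [max_eq_left h, max_eq_right (by linarith : -(x v - c) ≤ 0)]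
        ring
      · rw [max_eq_right h, max_eq_left (by linarith : 0 ≤ -(x v - c))]
        ring
    have hQ : ∑ v, d v * (x v - c)^2 = 1 + c^2 * m := by
      have : ∑ v, d v * (x v - c)^2 =
          ∑ v, d v * x v ^ 2 - 2 * c * ∑ v, d v * x v + c^2 * ∑ v, d v := by
        rw [Finset.mul_sum, Finset.mul_sum, ← Finset.sum_sub_distrib, ← Finset.sum_add_distrib]
        refine Finset.sum_congr rfl fun v _ => ?_
        ring
      rw [this, hx0, hx1, ← hmd]; ring
    have hcm : 0 ≤ c^2 * m := by positivity
    have := cheeger_core w hw_symm hw_nonneg d hd (fun v => x v - c) phi0 hp0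
      (by simp only [hQ]; linarith) (by linarith)
    simp only [hQ, sub_sub_sub_cancel_right] at this
    rw [hQL]
    refine le_trans ?_ this
    have := mul_nonneg (sq_nonneg phi0) hcm
    linarith
end

section
/- Let 0 < μ ≤ 1/2, let g : V → ℝ be feasible for the spectral program for μ, and fix an enumeration v_1,…,v_n of V with g(v_1) ≥ … ≥ g(v_n). Let S_j = {v_1,…,v_j}, let h be the largest index with Vol(S_h) ≤ Vol(G)/2, let z be the largest index with g(v_z) > 0, and let g_+(v) = max(g(v),0). If z > h, then Q_L(g_+)/Q_D(g_+) ≥ (1/2)·min{ ((μ/(1−μ))·φ_μ(G))², ((μ²·φ_μ(G) + (1−2μ)·φ_0(G))/(1−μ−μ²))² }. -/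
open Finset

lemma aux_int (B x : ℝ) (hx0 : 0 ≤ x) (hxB : x ≤ B) :
    IntervalIntegrable (fun t : ℝ => if t < x then (1:ℝ) else 0) MeasureTheory.volume 0 B ∧
    ∫ t in (0:ℝ)..B, (if t < x then (1:ℝ) else 0) = x := by
  have hanti : Antitone (fun t : ℝ => if t < x then (1:ℝ) else 0) := by
    intro s t hst
    dsimp only
    split_ifs <;> linarith
  have hI : ∀ p q : ℝ, IntervalIntegrable (fun t : ℝ => if t < x then (1:ℝ) else 0)
      MeasureTheory.volume p q := fun p q => hanti.intervalIntegrable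
  refine ⟨hI 0 B, ?_⟩
  rw [← intervalIntegral.integral_add_adjacent_intervals (hI 0 x) (hI x B)]
  have h1 : ∫ t in (0:ℝ)..x, (if t < x then (1:ℝ) else 0) = ∫ t in (0:ℝ)..x, (1:ℝ) := by
    apply intervalIntegral.integral_congr_ae
    filter_upwards [MeasureTheory.Measure.ae_ne MeasureTheory.volume x] with t hne ht
    rw [Set.uIoc_of_le hx0] at ht
    simp [lt_of_le_of_ne ht.2 hne]
  have h2 : ∫ t in x..B, (if t < x then (1:ℝ) else 0) = ∫ t in x..B, (0:ℝ) := by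
    apply intervalIntegral.integral_congr
    intro t ht
    rw [Set.uIcc_of_le hxB] at ht
    simp [ht.1]
  rw [h1, h2]
  simp

lemma aux_layer {ι : Type*} (s : Finset ι) (k x : ι → ℝ) (B c : ℝ) (hB : 0 ≤ B)
    (hx0 : ∀ i ∈ s, 0 ≤ x i) (hxB : ∀ i ∈ s, x i ≤ B)
    (hF : ∀ t, 0 ≤ t → t ≤ B → -c ≤ ∑ i ∈ s, k i * (if t < x i then (1:ℝ) else 0)) :
    -c * B ≤ ∑ i ∈ s, k i * x i := by
  have hint : ∀ i ∈ s, IntervalIntegrable (fun t : ℝ => k i * (if t < x i then (1:ℝ) else 0))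
      MeasureTheory.volume 0 B :=
    fun i hi => (aux_int B (x i) (hx0 i hi) (hxB i hi)).1.const_mul _
  have h1 : ∫ t in (0:ℝ)..B, ∑ i ∈ s, k i * (if t < x i then (1:ℝ) else 0)
      = ∑ i ∈ s, k i * x i := by
    rw [intervalIntegral.integral_finsetSum hint]
    refine Finset.sum_congr rfl fun i hi => ?_
    rw [intervalIntegral.integral_const_mul, (aux_int B (x i) (hx0 i hi) (hxB i hi)).2]
  rw [← h1]
  have h2 : ∫ t in (0:ℝ)..B, (-c) = -c * B := by simp [mul_comm]
  rw [← h2]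
  apply intervalIntegral.integral_mono_on hB (by simp)
  · have := IntervalIntegrable.sum s hint
    refine this.congr ?_
    intro t _
    simp
  · intro t ht
    exact hF t ht.1 ht.2

/-- Coarea form with a graph. -/
lemma aux_coarea {V : Type*} [Fintype V] [DecidableEq V] (w : V → V → ℝ) (d f : V → ℝ)
    (R A B m c : ℝ) (hA0 : 0 ≤ A) (hAB : A ≤ B)
    (hf0 : ∀ v, 0 ≤ f v) (hfB : ∀ v, f v ≤ B)
    (hF : ∀ t, 0 ≤ t → t ≤ B →
      (if t < A then m else -c) ≤
        ∑ u ∈ univ.filter (fun v => t < f v), ∑ v ∈ (univ.filter (fun v => t < f v))ᶜ, w u v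
        - R * ∑ v ∈ univ.filter (fun v => t < f v), d v) :
    m * A - c * (B - A) ≤ ∑ u, ∑ v, w u v * (f u - min (f u) (f v)) - R * ∑ v, d v * f v := by
  have key := aux_layer (univ : Finset (((V × V) ⊕ (V × V)) ⊕ (V ⊕ Unit)))
    (Sum.elim (Sum.elim (fun p => w p.1 p.2) (fun p => - w p.1 p.2))
      (Sum.elim (fun v => - R * d v) (fun _ => -(m + c))))
    (Sum.elim (Sum.elim (fun p => f p.1) (fun p => min (f p.1) (f p.2)))
      (Sum.elim f (fun _ => A))) B c (hA0.trans hAB)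
    (by rintro ((p | p) | (v | _)) _ <;> simp [hf0, hA0])
    (by rintro ((p | p) | (v | _)) _ <;> simp [hfB, hAB])
    (by
      intro t ht0 htB
      have h := hF t ht0 htB
      have e1 : ∑ u ∈ univ.filter (fun v => t < f v),
          ∑ v ∈ (univ.filter (fun v => t < f v))ᶜ, w u v
          = ∑ p : V × V, w p.1 p.2 * (if t < f p.1 then (1:ℝ) else 0)
            + ∑ p : V × V, (- w p.1 p.2) * (if t < min (f p.1) (f p.2) then (1:ℝ) else 0) := by
        rw [← Finset.sum_add_distrib, Fintype.sum_prod_type, Finset.sum_filter]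
        refine Finset.sum_congr rfl fun u _ => ?_
        rw [Finset.compl_filter, Finset.sum_filter]
        split_ifs with hu
        · refine Finset.sum_congr rfl fun v _ => ?_
          by_cases hv : t < f v <;> simp [hu, hv]
        · simp [hu]
      have e2 : R * ∑ v ∈ univ.filter (fun v => t < f v), d v
          = - ∑ v, (- R * d v) * (if t < f v then (1:ℝ) else 0) := by
        rw [Finset.sum_filter, Finset.mul_sum, ← Finset.sum_neg_distrib]
        refine Finset.sum_congr rfl fun v _ => ?_
        split_ifs <;> ring
      rw [e1, e2] at h
      rw [Fintype.sum_sum_type, Fintype.sum_sum_type, Fintype.sum_sum_type,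
        Fintype.sum_unique (ι := Unit)]
      change -c ≤ (∑ p : V × V, w p.1 p.2 * (if t < f p.1 then (1:ℝ) else 0)
            + ∑ p : V × V, (- w p.1 p.2) * (if t < min (f p.1) (f p.2) then (1:ℝ) else 0))
            + (∑ v, (- R * d v) * (if t < f v then (1:ℝ) else 0)
              + -(m + c) * (if t < A then (1:ℝ) else 0))
      by_cases htA : t < A
      · rw [if_pos htA] at h ⊢
        linarith
      · rw [if_neg htA] at h ⊢
        linarith)
  simp only [Fintype.sum_sum_type, Sum.elim_inl, Sum.elim_inr, Finset.univ_unique,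
        Finset.sum_singleton] at key
  have e1 : ∑ u, ∑ v, w u v * (f u - min (f u) (f v)) =
      ∑ p : V × V, w p.1 p.2 * f p.1 + ∑ p : V × V, (- w p.1 p.2) * min (f p.1) (f p.2) := by
    rw [← Finset.sum_add_distrib, Fintype.sum_prod_type]
    refine Finset.sum_congr rfl fun u _ => Finset.sum_congr rfl fun v _ => by ring
  have e2 : R * ∑ v, d v * f v = - ∑ v, (- R * d v) * f v := by
    rw [Finset.mul_sum, ← Finset.sum_neg_distrib]
    refine Finset.sum_congr rfl fun v _ => by ring
  rw [e1, e2]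
  linarith

lemma aux_cheeger {V : Type*} [Fintype V] (w : V → V → ℝ)
    (hw_symm : ∀ u v, w u v = w v u) (hw_nonneg : ∀ u v, 0 ≤ w u v)
    (d : V → ℝ) (hd : ∀ v, d v = ∑ u, w v u) (x : V → ℝ) (R : ℝ) (hR : 0 ≤ R)
    (H : R * ∑ v, d v * x v ^ 2 ≤ ∑ u, ∑ v, w u v * (x u ^ 2 - min (x u ^ 2) (x v ^ 2))) :
    R ^ 2 / 2 * ∑ v, d v * x v ^ 2 ≤ (1/2) * ∑ u, ∑ v, w u v * (x u - x v)^2 := by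
  have s1 : ∑ u, ∑ v, w u v * x u ^ 2 = ∑ v, d v * x v ^ 2 :=
    Finset.sum_congr rfl fun u _ => by rw [hd u, Finset.sum_mul]
  have s2 : ∑ u, ∑ v, w u v * x v ^ 2 = ∑ v, d v * x v ^ 2 := by
    rw [Finset.sum_comm, ← s1]
    refine Finset.sum_congr rfl fun u _ => Finset.sum_congr rfl fun v _ => by rw [hw_symm]
  have s3 : ∑ u, ∑ v, w u v * (x u ^ 2 - min (x u ^ 2) (x v ^ 2))
      = ∑ u, ∑ v, w u v * (x v ^ 2 - min (x u ^ 2) (x v ^ 2)) := by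
    rw [Finset.sum_comm]
    refine Finset.sum_congr rfl fun u _ => Finset.sum_congr rfl fun v _ => by
      rw [hw_symm, min_comm]
  have main : ∑ u, ∑ v, (R * (w u v * (x u ^ 2 - min (x u ^ 2) (x v ^ 2)))
        + R * (w u v * (x v ^ 2 - min (x u ^ 2) (x v ^ 2))))
      ≤ ∑ u, ∑ v, (w u v * (x u - x v)^2 + (R^2/2 * (w u v * x u ^2) +
          R^2/2 * (w u v * x v ^2))) := by
    refine Finset.sum_le_sum fun u _ => Finset.sum_le_sum fun v _ => ?_
    have hp : R * (x u ^ 2 - min (x u ^ 2) (x v ^ 2)) + R * (x v ^ 2 - min (x u ^ 2) (x v ^ 2))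
        ≤ (x u - x v)^2 + (R^2/2 * x u ^2 + R^2/2 * x v ^2) := by
      rcases le_total (x u ^ 2) (x v ^ 2) with hh | hh
      · rw [min_eq_left hh]
        nlinarith [sq_nonneg ((x v - x u) - R/2 * (x u + x v)), sq_nonneg (R * (x u - x v))]
      · rw [min_eq_right hh]
        nlinarith [sq_nonneg ((x u - x v) - R/2 * (x u + x v)), sq_nonneg (R * (x u - x v))]
    have := mul_le_mul_of_nonneg_left hp (hw_nonneg u v)
    linarith
  simp only [Finset.sum_add_distrib, ← Finset.mul_sum] at main
  rw [← s3, s1, s2] at main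
  have := mul_le_mul_of_nonneg_left H hR
  linarith

set_option maxHeartbeats 2000000 in
theorem sweep_case_z_gt_h {V : Type*} [Fintype V] [DecidableEq V] [Nonempty V]
    (w : V → V → ℝ)
    (hw_symm : ∀ u v, w u v = w v u)
    (hw_nonneg : ∀ u v, 0 ≤ w u v)
    (hw_loop : ∀ v, w v v = 0)
    (d : V → ℝ) (hd : ∀ v, d v = ∑ u, w v u)
    (hd_pos : ∀ v, 0 < d v)
    (vol : Finset V → ℝ) (hvol : ∀ S : Finset V, vol S = ∑ v ∈ S, d v)
    (cut : Finset V → ℝ) (hcut : ∀ S : Finset V, cut S = ∑ u ∈ S, ∑ v ∈ Sᶜ, w u v)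
    (phi : Finset V → ℝ) (hphi : ∀ S : Finset V, phi S = cut S / min (vol S) (vol Sᶜ))
    (QL QD : (V → ℝ) → ℝ)
    (hQL : ∀ x : V → ℝ, QL x = (1/2) * ∑ u, ∑ v, w u v * (x u - x v)^2)
    (hQD : ∀ x : V → ℝ, QD x = ∑ v, d v * x v ^ 2)
    (μ : ℝ) (hμ0 : 0 < μ) (hμhalf : μ ≤ 1/2)
    (phi0 : ℝ)
    (hphi0 : IsLeast {y : ℝ | ∃ S : Finset V, S.Nonempty ∧ S ≠ Finset.univ ∧ y = phi S} phi0)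
    (phimu : ℝ)
    (hphimu : IsLeast {y : ℝ | ∃ S : Finset V,
        μ * vol Finset.univ ≤ vol S ∧ vol S ≤ (1 - μ) * vol Finset.univ ∧ y = phi S} phimu)
    (n : ℕ) (hn : n = Fintype.card V) (e : Fin n ≃ V)
    (g : V → ℝ)
    (hg_sum : (∑ v, d v * g v) = 0)
    (hg_norm : QD g = 1)
    (hg_bounds : ∀ v, Real.sqrt (μ / ((1 - μ) * vol Finset.univ)) ≤ |g v| ∧
        |g v| ≤ Real.sqrt ((1 - μ) / (μ * vol Finset.univ)))
    (hg_sorted : ∀ i j : Fin n, i ≤ j → g (e j) ≤ g (e i))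
    (S : ℕ → Finset V)
    (hS : ∀ j : ℕ, S j = (Finset.univ.filter fun i : Fin n => (i : ℕ) < j).image e)
    (h : ℕ) (hh_le : h ≤ n)
    (hh1 : vol (S h) ≤ vol Finset.univ / 2)
    (hh2 : ∀ j : ℕ, j ≤ n → vol (S j) ≤ vol Finset.univ / 2 → j ≤ h)
    (z : ℕ) (hz_le : z ≤ n)
    (hz1 : ∀ i : Fin n, (i : ℕ) < z → 0 < g (e i))
    (hz2 : ∀ i : Fin n, z ≤ (i : ℕ) → g (e i) ≤ 0)
    (hzh : h < z) :
    QL (fun v => max (g v) 0) / QD (fun v => max (g v) 0) ≥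
      (1/2) * min ((μ / (1 - μ) * phimu)^2)
                  (((μ^2 * phimu + (1 - 2*μ) * phi0) / (1 - μ - μ^2))^2) := by
  have hT : 0 < vol univ := by
    rw [hvol]; exact Finset.sum_pos (fun v _ => hd_pos v) Finset.univ_nonempty
  set T := vol univ with hTdef
  have hmuc : 0 < 1 - μ := by linarith
  set x : V → ℝ := fun v => max (g v) 0 with hxdef
  have hx0 : ∀ v, 0 ≤ x v := fun v => le_max_right _ _
  set A := μ / ((1 - μ) * T) with hA
  set B := (1 - μ) / (μ * T) with hB
  have hA0 : 0 < A := by positivity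
  have hB0 : 0 < B := by positivity
  have hABle : A ≤ B := by
    rw [hA, hB, div_le_div_iff₀ (by positivity) (by positivity)]
    nlinarith
  have hdnn : ∀ v, 0 ≤ d v := fun v => (hd_pos v).le
  have hvolnn : ∀ U, 0 ≤ vol U := fun U => by
    rw [hvol]; exact Finset.sum_nonneg fun v _ => hdnn v
  have hcutnn : ∀ U, 0 ≤ cut U := fun U => by
    rw [hcut]; exact Finset.sum_nonneg fun u _ => Finset.sum_nonneg fun v _ => hw_nonneg u v
  have hphinn : ∀ U, 0 ≤ phi U := fun U => by
    rw [hphi]; exact div_nonneg (hcutnn U) (le_min (hvolnn _) (hvolnn _))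
  have hmono : ∀ U W : Finset V, U ⊆ W → vol U ≤ vol W := fun U W hUW => by
    rw [hvol, hvol]; exact Finset.sum_le_sum_of_subset_of_nonneg hUW fun v _ _ => hdnn v
  have hcompl : ∀ U, vol U + vol Uᶜ = T := fun U => by
    rw [hTdef, hvol, hvol, hvol]; exact Finset.sum_add_sum_compl U d
  have hphimu0 : 0 ≤ phimu := by
    obtain ⟨U, _, _, hU⟩ := hphimu.1; rw [hU]; exact hphinn U
  have hphi00 : 0 ≤ phi0 := by
    obtain ⟨U, _, _, hU⟩ := hphi0.1; rw [hU]; exact hphinn U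
  -- cut lower bounds
  have hcutmu : ∀ U, μ * T ≤ vol U → vol U ≤ (1 - μ) * T →
      phimu * min (vol U) (T - vol U) ≤ cut U := by
    intro U h1 h2
    have hle : phimu ≤ phi U := hphimu.2 ⟨U, h1, h2, rfl⟩
    have hc : vol Uᶜ = T - vol U := by linarith [hcompl U]
    rw [hphi, hc] at hle
    have hmin : 0 < min (vol U) (T - vol U) := by
      apply lt_min <;> nlinarith [mul_pos hμ0 hT]
    rwa [le_div_iff₀ hmin] at hle
  have hcut0 : ∀ U, vol U < μ * T → phi0 * vol U ≤ cut U := by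
    intro U h1
    rcases U.eq_empty_or_nonempty with rfl | hne
    · have : vol ∅ = 0 := by rw [hvol]; simp
      rw [this, mul_zero]; exact hcutnn _
    have hne' : U ≠ univ := by
      rintro rfl
      nlinarith
    have hle : phi0 ≤ phi U := hphi0.2 ⟨U, hne, hne', rfl⟩
    have hc : vol Uᶜ = T - vol U := by linarith [hcompl U]
    have hpos : 0 < vol U := by
      rw [hvol]; exact Finset.sum_pos (fun v _ => hd_pos v) hne
    rw [hphi, hc, min_eq_left (by nlinarith), le_div_iff₀ hpos] at hle
    exact hle
  -- the positive set
  set P := univ.filter (fun v => 0 < g v) with hP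
  have hPS : S z = P := by
    rw [hS, hP]
    ext v
    simp only [mem_image, mem_filter, mem_univ, true_and]
    constructor
    · rintro ⟨i, hi, rfl⟩; exact hz1 i hi
    · intro hv
      refine ⟨e.symm v, ?_, by simp⟩
      by_contra hcon
      have := hz2 (e.symm v) (not_lt.mp hcon)
      simp at this
      linarith
  have hPhalf : T / 2 < vol P := by
    rw [← hPS]
    by_contra hcon
    have := hh2 z hz_le (not_lt.mp hcon)
    omega
  -- bounds
  set a := Real.sqrt A with ha
  set b := Real.sqrt B with hb
  have ha0 : 0 < a := Real.sqrt_pos.mpr hA0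
  have hb0 : 0 < b := Real.sqrt_pos.mpr hB0
  have ha2 : a ^ 2 = A := Real.sq_sqrt hA0.le
  have hb2 : b ^ 2 = B := Real.sq_sqrt hB0.le
  have hab : a * b * T = 1 := by
    have h1 : a * b = 1 / T := by
      rw [ha, hb, ← Real.sqrt_mul hA0.le]
      have : A * B = (1 / T) ^ 2 := by rw [hA, hB]; field_simp
      rw [this, Real.sqrt_sq (by positivity)]
    rw [h1]; field_simp
  have hbsq : b ^ 2 * (μ * T) = 1 - μ := by rw [hb2, hB]; field_simp
  have hasq : a ^ 2 * ((1 - μ) * T) = μ := by rw [ha2, hA]; field_simp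
  have hPle : vol P ≤ (1 - μ) * T := by
    -- sum of d (|g| - a)(b - |g|) is nonnegative
    have q1 : 0 ≤ ∑ v, d v * ((|g v| - a) * (b - |g v|)) :=
      Finset.sum_nonneg fun v _ => mul_nonneg (hdnn v)
        (mul_nonneg (by linarith [(hg_bounds v).1]) (by linarith [(hg_bounds v).2]))
    have q2 : ∑ v, d v * ((|g v| - a) * (b - |g v|))
        = (a + b) * ∑ v, d v * |g v| - ∑ v, d v * g v ^ 2 - a * b * ∑ v, d v := by
      rw [Finset.mul_sum, Finset.mul_sum, ← Finset.sum_sub_distrib, ← Finset.sum_sub_distrib]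
      refine Finset.sum_congr rfl fun v _ => ?_
      rw [← sq_abs (g v)]; ring
    have q3 : ∑ v, d v * g v ^ 2 = 1 := by rw [← hQD, hg_norm]
    have q4 : ∑ v, d v = T := by rw [hTdef, hvol]
    have q5 : ∑ v, d v * |g v| ≤ 2 * (b * vol Pᶜ) := by
      have r1 : ∑ v, d v * |g v| = ∑ v, d v * (|g v| - g v) := by
        simp only [mul_sub, Finset.sum_sub_distrib, hg_sum, sub_zero]
      rw [r1, hvol, Finset.mul_sum, Finset.mul_sum, hP, Finset.compl_filter, Finset.sum_filter]
      refine Finset.sum_le_sum fun v _ => ?_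
      by_cases hv : 0 < g v
      · rw [if_neg (not_not.mpr hv), abs_of_pos hv]; simp
      · rw [if_pos hv, abs_of_nonpos (not_lt.mp hv)]
        have := (hg_bounds v).2
        rw [abs_of_nonpos (not_lt.mp hv)] at this
        nlinarith [hdnn v]
    rw [q2, q3, q4, hab] at q1
    have q6 : 1 ≤ (a + b) * (b * vol Pᶜ) := by
      nlinarith
    -- (a+b) b = 1/T + (1-μ)/(μ T) = 1/(μ T)
    have q7 : (a + b) * b * (μ * T) = 1 := by nlinarith
    have q8 : μ * T ≤ vol Pᶜ := by
      have := mul_le_mul_of_nonneg_right q6 (mul_pos hμ0 hT).le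
      have e1 : (a + b) * (b * vol Pᶜ) * (μ * T) = ((a + b) * b * (μ * T)) * vol Pᶜ := by ring
      rw [e1, q7] at this
      linarith
    linarith [hcompl P]
  -- constants
  have hD : 0 < 1 - μ - μ^2 := by nlinarith
  set κ := μ / (1 - μ) * phimu with hκ
  set R2 := (μ^2 * phimu + (1 - 2*μ) * phi0) / (1 - μ - μ^2) with hR2
  have hκ0 : 0 ≤ κ := by positivity
  have hR20 : 0 ≤ R2 := div_nonneg
    (add_nonneg (by positivity) (mul_nonneg (by linarith) hphi00)) hD.le
  set R := min κ R2 with hR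
  have hR0 : 0 ≤ R := le_min hκ0 hR20
  have hRκ : R ≤ κ := min_le_left _ _
  have hκ' : κ * (1 - μ) = μ * phimu := by rw [hκ]; field_simp
  have hRR2 : R * (1 - μ - μ^2) ≤ μ^2 * phimu + (1 - 2*μ) * phi0 := by
    have : R ≤ R2 := min_le_right _ _
    rwa [hR2, le_div_iff₀ hD] at this
  set ρ := max 0 (R - phi0) with hρ
  have hρ0 : 0 ≤ ρ := le_max_left _ _
  have hρ1 : R - phi0 ≤ ρ := le_max_right _ _
  have hx2 : ∀ v, 0 < g v → A ≤ x v ^ 2 := by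
    intro v hv
    have := (hg_bounds v).1
    rw [abs_of_pos hv] at this
    rw [← ha2, hxdef]
    simp only [max_eq_left hv.le]
    exact pow_le_pow_left₀ ha0.le this 2
  have hco := aux_coarea w d (fun v => x v ^ 2) R A B (T * (1 - μ) * (κ - R)) (ρ * (μ * T))
    hA0.le hABle (fun v => sq_nonneg _)
    (by
      intro v
      rw [← hb2]
      refine pow_le_pow_left₀ (hx0 v) ?_ 2
      exact max_le ((le_abs_self _).trans (hg_bounds v).2) hb0.le)
    (by
      intro t ht0 htB
      set U := univ.filter (fun v => t < x v ^ 2) with hU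
      rw [← hcut, ← hvol]
      have hUP : U ⊆ P := by
        intro v hv
        rw [hU, mem_filter] at hv
        rw [hP, mem_filter]
        refine ⟨mem_univ _, ?_⟩
        by_contra hcon
        have : x v = 0 := max_eq_right (not_lt.mp hcon)
        rw [this] at hv
        have := hv.2
        norm_num at this
        linarith
      have hUle : vol U ≤ (1 - μ) * T := (hmono U P hUP).trans hPle
      split_ifs with htA
      · have hUeq : U = P := by
          refine Finset.Subset.antisymm hUP fun v hv => ?_
          rw [hP, mem_filter] at hv
          rw [hU, mem_filter]
          exact ⟨mem_univ _, htA.trans_le (hx2 v hv.2)⟩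
        rw [hUeq]
        have hc := hcutmu P (by nlinarith) hPle
        rw [min_eq_right (by linarith)] at hc
        have e1 : T * (1 - μ) * (κ - R) = T * (μ * phimu) - R * ((1 - μ) * T) := by
          rw [← hκ']; ring
        rw [e1]
        have h2 := mul_le_mul_of_nonneg_left hPle hR0
        have h3 := mul_le_mul_of_nonneg_left hPle hphimu0
        linarith
      · have hneg : -(ρ * (μ * T)) ≤ 0 := by
          have : 0 ≤ ρ * (μ * T) := by positivity
          linarith
        rcases le_or_gt (μ * T) (vol U) with hbig | hsmall
        · have hc := hcutmu U hbig hUle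
          have hm : μ * vol U ≤ (1 - μ) * min (vol U) (T - vol U) := by
            rcases min_choice (vol U) (T - vol U) with hm | hm <;> rw [hm]
            · nlinarith [hvolnn U]
            · nlinarith
          have h1 : κ * vol U ≤ phimu * min (vol U) (T - vol U) := by
            have h2 := mul_le_mul_of_nonneg_left hm hphimu0
            have h3 : (1 - μ) * (κ * vol U) ≤ (1 - μ) * (phimu * min (vol U) (T - vol U)) := by
              have : (1 - μ) * (κ * vol U) = phimu * (μ * vol U) := by
                linear_combination (vol U) * hκ'
              rw [this]; linarith
            exact le_of_mul_le_mul_left h3 hmuc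
          have h4 := mul_le_mul_of_nonneg_right hRκ (hvolnn U)
          linarith
        · have hc := hcut0 U hsmall
          have h1 := mul_le_mul_of_nonneg_right hρ1 (hvolnn U)
          have h2 := mul_le_mul_of_nonneg_left hsmall.le hρ0
          linarith)
  have hnn : 0 ≤ T * (1 - μ) * (κ - R) * A - ρ * (μ * T) * (B - A) := by
    have e1 : T * (1 - μ) * (κ - R) * A = μ * (κ - R) := by rw [hA]; field_simp
    have e2 : ρ * (μ * T) * (B - A) = ρ * (1 - 2 * μ) / (1 - μ) := by
      rw [hA, hB]; field_simp; ring
    rw [e1, e2, sub_nonneg, div_le_iff₀ hmuc]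
    rcases max_choice 0 (R - phi0) with hm | hm
    · rw [hρ, hm, zero_mul]
      exact mul_nonneg (mul_nonneg hμ0.le (by linarith)) hmuc.le
    · rw [hρ, hm]
      have e3 : μ * (κ - R) * (1 - μ) = μ * (μ * phimu) - μ * R * (1 - μ) := by
        rw [← hκ']; ring
      rw [e3]; nlinarith
  have hH : R * ∑ v, d v * x v ^ 2 ≤ ∑ u, ∑ v, w u v * (x u ^ 2 - min (x u ^ 2) (x v ^ 2)) := by
    linarith
  have hfin := aux_cheeger w hw_symm hw_nonneg d hd x R hR0 hH
  rw [← hQL, ← hQD] at hfin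
  have hQDpos : 0 < QD x := by
    rw [hQD]
    have hPne : P.Nonempty := by
      rw [Finset.nonempty_iff_ne_empty]
      intro h0
      have : vol P = 0 := by rw [h0, hvol]; simp
      linarith
    obtain ⟨v, hv⟩ := hPne
    rw [hP, mem_filter] at hv
    refine Finset.sum_pos' (fun u _ => mul_nonneg (hdnn u) (sq_nonneg _)) ⟨v, mem_univ _, ?_⟩
    exact mul_pos (hd_pos v) (hA0.trans_le (hx2 v hv.2))
  rw [ge_iff_le, le_div_iff₀ hQDpos]
  refine le_trans ?_ hfin
  have hmin : min (κ ^ 2) (R2 ^ 2) ≤ R ^ 2 := by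
    rcases min_choice κ R2 with hm | hm <;> rw [hR, hm]
    · exact min_le_left _ _
    · exact min_le_right _ _
  have := mul_le_mul_of_nonneg_right hmin hQDpos.le
  linarith
end
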